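/- Let ε = i ∈ ℂ (a primitive fourth root of unity), and let g(X,Z) = ((1−ε)/2)Z³ + ((1+ε)/2)Z − (Z⁴ − 1)·(Z/4)·(3·((1−ε)/2)Z² + (1+ε)/2) + (1/2)XZ² ∈ ℂ[X,Z]. Let B = ℂ[x,y,z,t,w]/(xy − z² + 1, xt − y² + 1) and set f = (z + y)/2 + ε(y − z)/2 ∈ B. Then there exists a ℂ-algebra isomorphism Φ : ℂ[X,Y,Z,W]/(XY − Z⁴ + 1) → B such that Φ(X̄) = x, Φ(Z̄) = f + xw, x · Φ(Ȳ) = (f + xw)⁴ − 1, and x² · Φ(W̄) = z − g(x, f + xw). In particular, the cylinder over the double Danielewski surface {xy = z² − 1, xt = y² − 1} is isomorphic to the cylinder over the classical Danielewski surface xy = z⁴ − 1. -/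

import Mathlib

open MvPolynomial

/-- The polynomial ring `ℂ[X,Y,Z,W]` with `X 0 = X`, `X 1 = Y`, `X 2 = Z`, `X 3 = W`. -/
abbrev R4 : Type := MvPolynomial (Fin 4) ℂ

/-- The coordinate ring of the cylinder over the classical Danielewski surface
`xy = z⁴ - 1`. -/
abbrev WRing : Type := R4 ⧸ Ideal.span {(X 0 : R4) * X 1 - X 2 ^ 4 + 1}

noncomputable abbrev wMk : R4 →+* WRing :=
  Ideal.Quotient.mk _

/-- The coordinate ring `ℂ[x,y,z,t,w]/(xy − z² + 1, xt − y² + 1)` of the cylinder over the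
double Danielewski surface `{xy = z² − 1, xt = y² − 1}`.
Variables: `X 0 = x`, `X 1 = y`, `X 2 = z`, `X 3 = t`, `X 4 = w`. -/
abbrev DRing : Type :=
  MvPolynomial (Fin 5) ℂ ⧸
    Ideal.span {(X 0 : MvPolynomial (Fin 5) ℂ) * X 1 - X 2 ^ 2 + 1,
      (X 0 : MvPolynomial (Fin 5) ℂ) * X 3 - X 1 ^ 2 + 1}

noncomputable abbrev dMk : MvPolynomial (Fin 5) ℂ →+* DRing :=
  Ideal.Quotient.mk _

/-- `f = (z + y)/2 + ε(y − z)/2 ∈ B`, where `ε = i`. -/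
noncomputable def fElem : DRing :=
  (1 / 2 : ℂ) • (dMk (X 2) + dMk (X 1)) + (Complex.I / 2 : ℂ) • (dMk (X 1) - dMk (X 2))

/-- Evaluation of `g(X,Z) = ((1−ε)/2)Z³ + ((1+ε)/2)Z − (Z⁴−1)·(Z/4)·(3((1−ε)/2)Z² + (1+ε)/2)
+ (1/2)XZ²` at elements `u`, `v` of `B`, where `ε = i`. -/
noncomputable def gElem (u v : DRing) : DRing :=
  ((1 - Complex.I) / 2 : ℂ) • v ^ 3 + ((1 + Complex.I) / 2 : ℂ) • v
    - (v ^ 4 - 1) * ((1 / 4 : ℂ) • v) *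
        ((3 * (1 - Complex.I) / 2 : ℂ) • v ^ 2 + algebraMap ℂ DRing ((1 + Complex.I) / 2))
    + (1 / 2 : ℂ) • (u * v ^ 2)

/-- The combination `(z + y)/2 + i(y − z)/2` in an arbitrary `ℂ`-algebra. -/
noncomputable def fAlg {A : Type*} [CommRing A] [Algebra ℂ A] (y z : A) : A :=
  (1 / 2 : ℂ) • (z + y) + (Complex.I / 2 : ℂ) • (y - z)

/-- The polynomial `g` evaluated in an arbitrary `ℂ`-algebra. -/
noncomputable def gAlg {A : Type*} [CommRing A] [Algebra ℂ A] (u v : A) : A :=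
  ((1 - Complex.I) / 2 : ℂ) • v ^ 3 + ((1 + Complex.I) / 2 : ℂ) • v
    - (v ^ 4 - 1) * ((1 / 4 : ℂ) • v) *
        ((3 * (1 - Complex.I) / 2 : ℂ) • v ^ 2 + algebraMap ℂ A ((1 + Complex.I) / 2))
    + (1 / 2 : ℂ) • (u * v ^ 2)

section Algebra

variable {A B : Type*} [CommRing A] [Algebra ℂ A] [CommRing B] [Algebra ℂ B]

lemma map_fAlg (φ : A →ₐ[ℂ] B) (y z : A) : φ (fAlg y z) = fAlg (φ y) (φ z) := by
  simp only [fAlg, map_add, map_smul, map_sub]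

lemma map_gAlg (φ : A →ₐ[ℂ] B) (u v : A) : φ (gAlg u v) = gAlg (φ u) (φ v) := by
  simp only [gAlg, map_add, map_smul, map_sub, map_mul, map_pow, map_one, AlgHom.commutes]

/-- The constants `q = 1/4`, `a = (1 − i)/2`, `b = (1 + i)/2` in a `ℂ`-algebra, with the relations
between them, in terms of which `f` and `g` have no scalar multiplications. -/
lemma exists_constants (A : Type*) [CommRing A] [Algebra ℂ A] :
    ∃ q a b : A, 4 * q = 1 ∧ a + b = 1 ∧ 2 * (a * b) = 1 ∧
      (∀ y z : A, fAlg y z = a * z + b * y) ∧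
      ∀ u v : A, gAlg u v = a * v ^ 3 + b * v - (v ^ 4 - 1) * (q * v) * (3 * a * v ^ 2 + b)
        + 2 * q * (u * v ^ 2) := by
  have hI := Complex.I_sq
  refine ⟨algebraMap ℂ A (1 / 4), algebraMap ℂ A ((1 - Complex.I) / 2),
    algebraMap ℂ A ((1 + Complex.I) / 2), ?_, ?_, ?_, fun y z ↦ ?_, fun u v ↦ ?_⟩
  · rw [← map_ofNat (algebraMap ℂ A) 4, ← map_mul, ← map_one (algebraMap ℂ A)]
    congr 1; norm_num
  · rw [← map_add, ← map_one (algebraMap ℂ A)]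
    congr 1; ring
  · rw [← map_ofNat (algebraMap ℂ A) 2, ← map_mul, ← map_mul, ← map_one (algebraMap ℂ A)]
    congr 1; linear_combination (-1 / 2 : ℂ) * hI
  · have e₁ : (1 - Complex.I) / 2 = 1 / 2 - Complex.I / 2 := by ring
    have e₂ : (1 + Complex.I) / 2 = 1 / 2 + Complex.I / 2 := by ring
    simp only [fAlg, Algebra.smul_def, e₁, e₂, map_add, map_sub]
    ring
  · have e₁ : 3 * (1 - Complex.I) / 2 = 3 * ((1 - Complex.I) / 2) := by ring
    have e₂ : (1 / 2 : ℂ) = 2 * (1 / 4) := by norm_num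
    simp only [gAlg, Algebra.smul_def, e₁]
    rw [e₂, map_mul, map_mul, map_ofNat, map_ofNat]

/-- On the double Danielewski cylinder, `v = f + xw` satisfies `x ∣ v⁴ − 1` and
`x² ∣ z − g(x, v)`. -/
lemma exists_quotients_of_double {x y z t : A} (w : A) (hz : x * y = z ^ 2 - 1)
    (hy : x * t = y ^ 2 - 1) :
    ∃ p r : A, x * p = (fAlg y z + x * w) ^ 4 - 1 ∧
      x ^ 2 * r = z - gAlg x (fAlg y z + x * w) := by
  obtain ⟨q, a, b, hq, hab, hab', hf, hg⟩ := exists_constants A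
  simp only [hf, hg]
  set v := a * z + b * y + x * w with hv
  set m := a ^ 2 * (y - t) + 2 * (a * z + b * y) * w + x * w ^ 2 with hm
  have hv2 : v ^ 2 = y * z + x * m := by
    obtain rfl : b = 1 - a := by linear_combination hab
    rw [hv, hm]
    linear_combination (-a ^ 2) * hz + a ^ 2 * hy + (y * z - y ^ 2) * hab'
  set p := t + y + x * t * y + 2 * (y * z) * m + x * m ^ 2 with hp
  have hv4 : v ^ 4 - 1 = x * p := by
    rw [show v ^ 4 = (v ^ 2) ^ 2 by ring, hv2, hp]
    linear_combination (-y ^ 2) * hz - (1 + x * y) * hy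
  have hdvd : x ∣ p * (q * v) * (3 * a * v ^ 2 + b) - 2 * q * v ^ 2 - a ^ 2 * y ^ 2
      - 2 * q * t * z - w * (a * y * z + b) - a * v * m := by
    rw [← Ideal.mem_span_singleton, ← Ideal.Quotient.eq_zero_iff_mem]
    set π := Ideal.Quotient.mk (Ideal.span {x})
    have hx : π x = 0 := Ideal.Quotient.eq_zero_iff_mem.2 (Ideal.mem_span_singleton_self x)
    have hq := congrArg π hq
    have hab := congrArg π hab
    have hab' := congrArg π hab'
    have hz := congrArg π hz
    have hy := congrArg π hy
    rw [hv2, hp, hv, hm]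
    simp only [map_add, map_sub, map_mul, map_pow, map_one, map_ofNat, hx, zero_mul, add_zero]
      at hq hab hab' hz hy ⊢
    generalize π q = q, π a = a, π b = b, π y = y, π z = z, π t = t, π w = w at *
    have hb : b ^ 2 = b - 2 * q := by
      linear_combination b * hab - 2 * q * hab' + a * b * hq
    grind only
  obtain ⟨r, hr⟩ := hdvd
  refine ⟨p, r, hv4.symm, ?_⟩
  have hab2 : a ^ 2 + b ^ 2 = 0 := by linear_combination (a + b + 1) * hab - hab'
  have habq : a * b = 2 * q := by linear_combination (-a * b) * hq + 2 * q * hab'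
  rw [hv4]
  linear_combination (-x) * hr + a * v * hv2 + (a * y * z + b) * hv - a ^ 2 * y * hz + y * hab2
    + (y ^ 2 + 1) * z * habq - 2 * q * z * hy + z * hq

/-- On the cylinder over `XY = Z⁴ − 1`, the element `z = g(X, Z) + X²W` extends to a point of the
double Danielewski cylinder with `Z = f + Xw`. -/
lemma exists_quotients_of_classical {x y z : A} (w : A) (h : x * y = z ^ 4 - 1) :
    ∃ y' t' w' : A, x * y' = (gAlg x z + x ^ 2 * w) ^ 2 - 1 ∧ x * t' = y' ^ 2 - 1 ∧
      fAlg y' (gAlg x z + x ^ 2 * w) + x * w' = z := by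
  obtain ⟨q, a, b, hq, hab, hab', hf, hg⟩ := exists_constants A
  simp only [hf, hg]
  set m := -(y * (q * z) * (3 * a * z ^ 2 + b)) + 2 * q * z ^ 2 + x * w with hm
  have hz' : a * z ^ 3 + b * z - (z ^ 4 - 1) * (q * z) * (3 * a * z ^ 2 + b)
      + 2 * q * (x * z ^ 2) + x ^ 2 * w = a * z ^ 3 + b * z + x * m := by
    rw [← h, hm]; ring
  rw [hz']
  set y' := y * (a ^ 2 * z ^ 2 + 1) + 2 * (a * z ^ 3 + b * z) * m + x * m ^ 2 with hy'
  have hdvd : x ∣ y' - (a * z + b * z ^ 3) := by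
    rw [← Ideal.mem_span_singleton, ← Ideal.Quotient.eq_zero_iff_mem]
    set π := Ideal.Quotient.mk (Ideal.span {x})
    have hx : π x = 0 := Ideal.Quotient.eq_zero_iff_mem.2 (Ideal.mem_span_singleton_self x)
    have hq := congrArg π hq
    have hab := congrArg π hab
    have hab' := congrArg π hab'
    have h := congrArg π h
    rw [hy', hm]
    simp only [map_add, map_sub, map_mul, map_pow, map_one, map_ofNat, map_neg, hx, zero_mul,
      add_zero] at hq hab hab' h ⊢
    generalize π q = q, π a = a, π b = b, π y = y, π z = z, π w = w at *
    have hb : b ^ 2 = b - 2 * q := by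
      linear_combination b * hab - 2 * q * hab' + a * b * hq
    grind only
  obtain ⟨s, hs⟩ := hdvd
  obtain hs : y' = a * z + b * z ^ 3 + x * s := by linear_combination hs
  have hab2 : a ^ 2 + b ^ 2 = 0 := by linear_combination (a + b + 1) * hab - hab'
  refine ⟨y', y * (b ^ 2 * z ^ 2 + 1) + 2 * (a * z + b * z ^ 3) * s + x * s ^ 2,
    -(a * m + b * s), ?_, ?_, ?_⟩
  · rw [hy']
    linear_combination (a ^ 2 * z ^ 2 + 1) * h - z ^ 2 * hab2 - z ^ 4 * hab'
  · rw [hs]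
    linear_combination (b ^ 2 * z ^ 2 + 1) * h - z ^ 2 * hab2 - z ^ 4 * hab'
  · rw [hs]
    linear_combination z ^ 3 * hab2 + z * hab'

end Algebra

section Regular

variable {σ : Type*}

/-- The substitution `X i ↦ c` in a polynomial ring. -/
noncomputable def substVar [DecidableEq σ] (i : σ) (c : ℂ) :
    MvPolynomial σ ℂ →ₐ[ℂ] MvPolynomial σ ℂ :=
  aeval (Function.update X i (C c))

lemma X_sub_C_dvd_sub_substVar [DecidableEq σ] (i : σ) (c : ℂ) (p : MvPolynomial σ ℂ) :
    X i - C c ∣ p - substVar i c p := by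
  set J : Ideal (MvPolynomial σ ℂ) := Ideal.span {X i - C c}
  have key : Ideal.Quotient.mkₐ ℂ J = (Ideal.Quotient.mkₐ ℂ J).comp (substVar i c) := by
    refine MvPolynomial.algHom_ext fun j ↦ ?_
    rw [AlgHom.comp_apply, substVar, aeval_X]
    by_cases hj : j = i
    · subst hj
      rw [Function.update_self]
      exact Ideal.Quotient.eq.2 (Ideal.mem_span_singleton_self _)
    · rw [Function.update_of_ne hj]
  rw [← Ideal.mem_span_singleton]
  exact Ideal.Quotient.eq.1 (DFunLike.congr_fun key p)

lemma X_sub_C_dvd_of_substVar_eq_zero [DecidableEq σ] {i : σ} {c : ℂ} {p : MvPolynomial σ ℂ}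
    (h : substVar i c p = 0) : X i - C c ∣ p := by
  simpa [h] using X_sub_C_dvd_sub_substVar i c p

lemma X_dvd_sub_substVar_zero [DecidableEq σ] (i : σ) (p : MvPolynomial σ ℂ) :
    X i ∣ p - substVar i 0 p := by
  simpa using X_sub_C_dvd_sub_substVar i 0 p

lemma X_sub_C_ne_zero (i : σ) (c : ℂ) : (X i - C c : MvPolynomial σ ℂ) ≠ 0 := fun h ↦ by
  simpa using congrArg (aeval (fun _ ↦ c + 1)) h

end Regular

/-- The residue class of `X` is a non-zero-divisor in the classical cylinder. -/
lemma wMk_X_mul_cancel {p q : WRing} (h : wMk (X 0) * p = wMk (X 0) * q) : p = q := by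
  rw [← sub_eq_zero] at h ⊢
  rw [← mul_sub] at h
  obtain ⟨r, hr⟩ := Ideal.Quotient.mk_surjective (p - q)
  rw [← hr] at h ⊢
  rw [← map_mul, Ideal.Quotient.eq_zero_iff_mem, Ideal.mem_span_singleton] at h
  rw [Ideal.Quotient.eq_zero_iff_mem, Ideal.mem_span_singleton]
  obtain ⟨s, hs⟩ := h
  have h0 : substVar 0 0 s = 0 := by
    have e := congrArg (substVar (0 : Fin 4) 0) hs
    have hne : (1 - X 2 ^ 4 : R4) ≠ 0 := fun e ↦ by
      simpa using congrArg (aeval (fun _ ↦ (0 : ℂ))) e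
    rw [map_mul, map_mul] at e
    have hX : substVar (0 : Fin 4) 0 (X 0 * X 1 - X 2 ^ 4 + 1) = 1 - X 2 ^ 4 := by
      simp [substVar]
      ring
    have hX0 : substVar (0 : Fin 4) 0 (X 0) = 0 := by simp [substVar]
    rw [hX, hX0, zero_mul] at e
    exact (mul_eq_zero.1 e.symm).resolve_left hne
  obtain ⟨u, hu⟩ := X_dvd_sub_substVar_zero 0 s
  rw [h0, sub_zero] at hu
  refine ⟨u, mul_left_cancel₀ (X_ne_zero (R := ℂ) (0 : Fin 4)) ?_⟩
  rw [hs, hu]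
  ring

/-- The residue class of `x` is a non-zero-divisor in the double Danielewski cylinder. -/
lemma dMk_X_mul_cancel {p q : DRing} (h : dMk (X 0) * p = dMk (X 0) * q) : p = q := by
  rw [← sub_eq_zero] at h ⊢
  rw [← mul_sub] at h
  obtain ⟨r, hr⟩ := Ideal.Quotient.mk_surjective (p - q)
  rw [← hr] at h ⊢
  rw [← map_mul, Ideal.Quotient.eq_zero_iff_mem, Ideal.mem_span_pair] at h
  rw [Ideal.Quotient.eq_zero_iff_mem, Ideal.mem_span_pair]
  obtain ⟨s₁, s₂, hs⟩ := h
  obtain ⟨u₁, hu₁⟩ := X_dvd_sub_substVar_zero 0 s₁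
  obtain ⟨u₂, hu₂⟩ := X_dvd_sub_substVar_zero 0 s₂
  generalize hk₁ : substVar 0 0 s₁ = k₁ at *
  generalize hk₂ : substVar 0 0 s₂ = k₂ at *
  have e : k₁ * (1 - X 2 ^ 2) + k₂ * (1 - X 1 ^ 2) = 0 := by
    have e := congrArg (substVar (0 : Fin 5) 0) hs
    simp only [map_add, map_mul, hk₁, hk₂] at e
    simp [substVar] at e
    linear_combination e
  have hne : (1 - X 2 ^ 2 : MvPolynomial (Fin 5) ℂ) ≠ 0 := fun e ↦ by
    simpa using congrArg (aeval (fun _ ↦ (0 : ℂ))) e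
  have hdvd (c : ℂ) (k l : MvPolynomial (Fin 5) ℂ)
      (hkl : k * (1 - X 2 ^ 2) = (X 1 - C c) * l) : X 1 - C c ∣ k := by
    refine X_sub_C_dvd_of_substVar_eq_zero ?_
    have e := congrArg (substVar (1 : Fin 5) c) hkl
    have hX : substVar (1 : Fin 5) c (1 - X 2 ^ 2) = 1 - X 2 ^ 2 := by simp [substVar]
    have hX1 : substVar (1 : Fin 5) c (X 1 - C c) = 0 := by simp [substVar]
    rw [map_mul, map_mul, hX, hX1, zero_mul] at e
    exact (mul_eq_zero.1 e).resolve_right hne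
  obtain ⟨l, rfl⟩ := hdvd 1 k₁ ((X 1 + 1) * k₂) (by rw [C_1]; linear_combination e)
  have e' : l * (1 - X 2 ^ 2) = (X 1 - C (-1)) * k₂ := by
    refine mul_left_cancel₀ (X_sub_C_ne_zero 1 1) ?_
    rw [C_neg, C_1] at *
    linear_combination e
  obtain ⟨n, rfl⟩ := hdvd (-1) l k₂ e'
  obtain rfl : k₂ = n * (1 - X 2 ^ 2) := by
    refine mul_left_cancel₀ (X_sub_C_ne_zero 1 (-1)) ?_
    linear_combination -e'
  refine ⟨u₁ + n * X 3, u₂ - n * X 1, mul_left_cancel₀ (X_ne_zero (R := ℂ) (0 : Fin 5)) ?_⟩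
  rw [C_neg, C_1] at hu₁
  linear_combination hs - (X 0 * X 1 - X 2 ^ 2 + 1) * hu₁ - (X 0 * X 3 - X 1 ^ 2 + 1) * hu₂

lemma dMk_relations : dMk (X 0) * dMk (X 1) = dMk (X 2) ^ 2 - 1 ∧
    dMk (X 0) * dMk (X 3) = dMk (X 1) ^ 2 - 1 := by
  constructor
  · rw [← sub_eq_zero]
    simp only [← map_mul, ← map_pow, ← map_sub, ← map_one dMk]
    exact Ideal.Quotient.eq_zero_iff_mem.2 (Ideal.subset_span (Or.inl (by ring)))
  · rw [← sub_eq_zero]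
    simp only [← map_mul, ← map_pow, ← map_sub, ← map_one dMk]
    exact Ideal.Quotient.eq_zero_iff_mem.2 (Ideal.subset_span (Or.inr (by simp; ring)))

lemma wMk_relation : wMk (X 0) * wMk (X 1) = wMk (X 2) ^ 4 - 1 := by
  rw [← sub_eq_zero]
  simp only [← map_mul, ← map_pow, ← map_sub, ← map_one wMk]
  exact Ideal.Quotient.eq_zero_iff_mem.2 (Ideal.subset_span (by simp; ring))

/-- A point of the classical cylinder with values in `A` is an algebra map out of `WRing`. -/
lemma exists_algHom_of_classical {A : Type*} [CommRing A] [Algebra ℂ A] (x y z w : A)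
    (h : x * y = z ^ 4 - 1) :
    ∃ φ : WRing →ₐ[ℂ] A, φ (wMk (X 0)) = x ∧ φ (wMk (X 1)) = y ∧ φ (wMk (X 2)) = z ∧
      φ (wMk (X 3)) = w := by
  refine ⟨Ideal.Quotient.liftₐ _ (aeval ![x, y, z, w]) ?_, ?_, ?_, ?_, ?_⟩
  · intro p hp
    obtain ⟨s, rfl⟩ := Ideal.mem_span_singleton.1 hp
    rw [map_mul]
    simp [h]
  all_goals exact aeval_X _ _

/-- A point of the double Danielewski cylinder with values in `A` is an algebra map out of
`DRing`. -/
lemma exists_algHom_of_double {A : Type*} [CommRing A] [Algebra ℂ A] (x y z t w : A)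
    (hz : x * y = z ^ 2 - 1) (hy : x * t = y ^ 2 - 1) :
    ∃ φ : DRing →ₐ[ℂ] A, φ (dMk (X 0)) = x ∧ φ (dMk (X 1)) = y ∧ φ (dMk (X 2)) = z ∧
      φ (dMk (X 3)) = t ∧ φ (dMk (X 4)) = w := by
  refine ⟨Ideal.Quotient.liftₐ _ (aeval ![x, y, z, t, w]) ?_, ?_, ?_, ?_, ?_, ?_⟩
  · intro p hp
    obtain ⟨s₁, s₂, rfl⟩ := Ideal.mem_span_pair.1 hp
    rw [map_add, map_mul, map_mul]
    simp [hz, hy]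
  all_goals exact aeval_X _ _

theorem cylinder_over_double_Danielewski_surface_explicit_iso :
    ∃ Φ : WRing ≃ₐ[ℂ] DRing,
      Φ (wMk (X 0)) = dMk (X 0) ∧
      Φ (wMk (X 2)) = fElem + dMk (X 0) * dMk (X 4) ∧
      dMk (X 0) * Φ (wMk (X 1)) = (fElem + dMk (X 0) * dMk (X 4)) ^ 4 - 1 ∧
      dMk (X 0) ^ 2 * Φ (wMk (X 3)) =
        dMk (X 2) - gElem (dMk (X 0)) (fElem + dMk (X 0) * dMk (X 4)) := by
  obtain ⟨hz, hy⟩ := dMk_relations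
  obtain ⟨p, r, hp, hr⟩ := exists_quotients_of_double (dMk (X 4)) hz hy
  obtain ⟨Φ, Φ0, Φ1, Φ2, Φ3⟩ := exists_algHom_of_classical _ _ _ r hp
  obtain ⟨y, t, w, hy', ht', hw'⟩ := exists_quotients_of_classical (wMk (X 3)) wMk_relation
  obtain ⟨Ψ, Ψ0, Ψ1, Ψ2, Ψ3, Ψ4⟩ := exists_algHom_of_double _ _ _ _ w hy' ht'
  have ΨZ : Ψ (fAlg (dMk (X 1)) (dMk (X 2)) + dMk (X 0) * dMk (X 4)) = wMk (X 2) := by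
    rw [map_add, map_fAlg, map_mul, Ψ0, Ψ1, Ψ2, Ψ4, hw']
  have Φz : Φ (gAlg (wMk (X 0)) (wMk (X 2)) + wMk (X 0) ^ 2 * wMk (X 3)) = dMk (X 2) := by
    rw [map_add, map_gAlg, map_mul, map_pow, Φ0, Φ2, Φ3, hr]
    ring
  have Φy : Φ y = dMk (X 1) := by
    refine dMk_X_mul_cancel ?_
    rw [hz, ← Φ0, ← map_mul, hy', map_sub, map_pow, Φz, map_one]
  have hΦΨ : Φ.comp Ψ = AlgHom.id ℂ DRing := by
    refine Ideal.Quotient.algHom_ext _ (MvPolynomial.algHom_ext fun i ↦ ?_)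
    change Φ (Ψ (dMk (X i))) = dMk (X i)
    fin_cases i
    · exact (congrArg Φ Ψ0).trans Φ0
    · exact (congrArg Φ Ψ1).trans Φy
    · exact (congrArg Φ Ψ2).trans Φz
    · refine (congrArg Φ Ψ3).trans (dMk_X_mul_cancel ?_)
      change _ = dMk (X 0) * dMk (X 3)
      rw [hy, ← Φ0, ← map_mul, ht', map_sub, map_pow, Φy, map_one]
    · refine (congrArg Φ Ψ4).trans (dMk_X_mul_cancel ?_)
      have e := congrArg Φ hw'
      rw [map_add, map_fAlg, Φy, Φz, map_mul, Φ0, Φ2] at e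
      exact add_left_cancel e
  have hΨΦ : Ψ.comp Φ = AlgHom.id ℂ WRing := by
    refine Ideal.Quotient.algHom_ext _ (MvPolynomial.algHom_ext fun i ↦ ?_)
    change Ψ (Φ (wMk (X i))) = wMk (X i)
    fin_cases i
    · exact (congrArg Ψ Φ0).trans Ψ0
    · refine (congrArg Ψ Φ1).trans (wMk_X_mul_cancel ?_)
      change _ = wMk (X 0) * wMk (X 1)
      rw [wMk_relation, ← Ψ0, ← map_mul, hp, map_sub, map_pow, ΨZ, map_one]
    · exact (congrArg Ψ Φ2).trans ΨZ
    · refine (congrArg Ψ Φ3).trans (wMk_X_mul_cancel (wMk_X_mul_cancel ?_))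
      have e := congrArg Ψ hr
      rw [map_sub, map_gAlg, ΨZ, map_mul, map_pow, Ψ0, Ψ2, add_sub_cancel_left] at e
      rw [← mul_assoc, ← mul_assoc, ← pow_two]
      exact e
  refine ⟨AlgEquiv.ofAlgHom Φ Ψ hΦΨ hΨΦ, Φ0, Φ2, ?_, ?_⟩
  · exact (congrArg (dMk (X 0) * ·) Φ1).trans hp
  · exact (congrArg (dMk (X 0) ^ 2 * ·) Φ3).trans hr
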